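/- arXiv:2501.14931 — 3 statements merged into one kernel-verified Lean document; each statement's English description precedes it below -/
import Mathlib

section
/- Let R be a finite set with |R| = n = α + β + γ for natural numbers α, β, γ, and let R₁, R₂ ⊆ R with |R₁| ≥ n − ⌊α/2⌋ + β and |R₂| ≥ ⌊α/2⌋ + 1. Then |R₁ ∩ R₂| ≥ β + 1, and consequently for every B ⊆ R with |B| ≤ β there exists r ∈ R₁ ∩ R₂ with r ∉ B. -/
/-- Quorum intersection for past-perfection safety of pod-core: with `|R| = n = α + β + γ`,
any `R₁ ⊆ R` of size at least `n − ⌊α/2⌋ + β` and `R₂ ⊆ R` of size at least `⌊α/2⌋ + 1`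
intersect in at least `β + 1` replicas; hence for any `B ⊆ R` with `|B| ≤ β` there is a
replica in `R₁ ∩ R₂` outside `B`. -/
theorem quorum_intersection {ι : Type*} [DecidableEq ι]
    (R R₁ R₂ : Finset ι) (n α β γ : ℕ)
    (hn : R.card = n) (hsum : n = α + β + γ)
    (h₁ : R₁ ⊆ R) (h₂ : R₂ ⊆ R)
    (hc₁ : R₁.card ≥ n - α / 2 + β) (hc₂ : R₂.card ≥ α / 2 + 1) :
    (R₁ ∩ R₂).card ≥ β + 1 ∧
    ∀ B ⊆ R, B.card ≤ β → ∃ r ∈ R₁ ∩ R₂, r ∉ B := by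
  have hu : (R₁ ∪ R₂).card ≤ R.card := Finset.card_le_card (Finset.union_subset h₁ h₂)
  have he := Finset.card_union_add_card_inter R₁ R₂
  have hI : (R₁ ∩ R₂).card ≥ β + 1 := by omega
  refine ⟨hI, fun B _ hB => ?_⟩
  exact Finset.exists_mem_notMem_of_card_lt_card (by omega)
end

section
/- Let R be a finite set with |R| = n = α + β + γ for natural numbers α, β, γ with α ≥ 4β + 2γ + 1, let H ⊆ R with |R \ H| ≤ β + γ, let f : R → ℕ, and let t be a natural number such that the number of r ∈ R with f(r) ≤ t is at least ⌊α/2⌋ − β + 1. Then there exists r ∈ H with f(r) ≤ t. -/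
/-- "rperf bounded by honest timestamp" (Lemma 2 for pod-core): with `|R| = n = α + β + γ`,
`α ≥ 4β + 2γ + 1`, at most `β + γ` replicas outside the honest set `H`, and at least
`⌊α/2⌋ − β + 1` replicas `r ∈ R` with `f r ≤ t`, some honest replica `r ∈ H` has
`f r ≤ t`. -/
theorem rperf_bounded_by_honest {ι : Type*} [DecidableEq ι]
    (R H : Finset ι) (n α β γ : ℕ)
    (hn : R.card = n) (hsum : n = α + β + γ) (hα : α ≥ 4 * β + 2 * γ + 1)
    (hH : H ⊆ R) (hfault : (R \ H).card ≤ β + γ)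
    (f : ι → ℕ) (t : ℕ)
    (hcount : (R.filter (fun r => f r ≤ t)).card ≥ α / 2 - β + 1) :
    ∃ r ∈ H, f r ≤ t := by
  by_contra hne
  have hsub : R.filter (fun r => f r ≤ t) ⊆ R \ H := by
    intro r hr
    rw [Finset.mem_filter] at hr
    exact Finset.mem_sdiff.mpr ⟨hr.1, fun h => hne ⟨r, h, hr.2⟩⟩
  have hcard := Finset.card_le_card hsub
  omega
end

section
/- Let R be a finite set with |R| = n = α + β + γ for natural numbers α, β, γ, let H ⊆ R with |R \ H| ≤ β, and let S, B ⊆ R with |S| ≥ ⌊α/2⌋ + 1 and |B| ≥ n − ⌊α/2⌋ + β. Then there exists r ∈ S ∩ B ∩ H. -/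
/-- No-framing counting lemma of bidset-core accountability: with `|R| = n = α + β + γ`,
at most `β` replicas outside the honest set `H`, `|S| ≥ ⌊α/2⌋ + 1` and
`|B| ≥ n − ⌊α/2⌋ + β`, some honest replica lies in `S ∩ B ∩ H`. -/
theorem bidset_no_framing {ι : Type*} [DecidableEq ι]
    (R H S B : Finset ι) (n α β γ : ℕ)
    (hn : R.card = n) (hsum : n = α + β + γ)
    (hH : H ⊆ R) (hfault : (R \ H).card ≤ β)
    (hS : S ⊆ R) (hB : B ⊆ R)
    (hcS : S.card ≥ α / 2 + 1) (hcB : B.card ≥ n - α / 2 + β) :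
    ∃ r, r ∈ S ∩ B ∩ H := by
  by_contra hne
  have hsub : S ∩ B ⊆ R \ H := by
    intro r hr
    refine Finset.mem_sdiff.mpr ⟨hS (Finset.mem_inter.mp hr).1, fun hrH => ?_⟩
    exact hne ⟨r, Finset.mem_inter.mpr ⟨hr, hrH⟩⟩
  have h1 := Finset.card_le_card hsub
  have h2 := Finset.card_le_card (Finset.union_subset hS hB)
  have h3 := Finset.card_union_add_card_inter S B
  omega
end
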